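/- arXiv:2311.06662 — 2 statements merged into one kernel-verified Lean document; each statement's English description precedes it below -/
import Mathlib

section
/- Let K be a field and let (σ,α) be a collection of hypermaps on the set {1,…,n}. Then the set of flows on (σ,α), i.e. functions f : {1,…,n} → K such that Σ_{i∈C} f(i) = 0 for the support C of every cycle of σ and of every cycle of α (fixed points included as cycles of length 1), forms a K-vector space under pointwise operations of dimension n + κ(σ,α) − z(σ) − z(α). Consequently, if K is a finite field with q elements, the number of flows f : {1,…,n} → K on (σ,α) is q^{n+κ(σ,α)−z(σ)−z(α)}. -/
/-!
Let `V = γ → K` with the dot product, and let `W σ`, `W α` be the subspaces of functions constant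
on the cycles of `σ`, respectively of `α`. Their dimensions are `z(σ)` and `z(α)`, and
`W σ ⊓ W α` consists of the functions constant on the orbits of the group generated by `σ` and `α`
(`blockSpace_inf`), so it has dimension `κ(σ, α)`. Since `W σ` is spanned by the indicators of the
cycles of `σ`, a function is a flow exactly when it is orthogonal to `W σ ⊔ W α`
(`flowSpace_eq_orthogonal`). The dot product is nondegenerate, so the flow space has dimension
`n - dim (W σ ⊔ W α) = n - (z(σ) + z(α) - κ(σ, α))`. Over a field with `q` elements a space of
dimension `d` has `q ^ d` elements.
-/

open scoped Classical

namespace Hypermap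

variable {γ : Type*} [Fintype γ] [DecidableEq γ]

/-- The number of cycles of a permutation, counting fixed points as cycles. -/
noncomputable def zc (π : Equiv.Perm γ) : ℕ :=
  Nat.card (MulAction.orbitRel.Quotient (Subgroup.zpowers π) γ)

/-- The number of connected components of the collection of hypermaps `(σ, α)`. -/
noncomputable def kappa (σ α : Equiv.Perm γ) : ℕ :=
  Nat.card (MulAction.orbitRel.Quotient
    (Subgroup.closure ({σ, α} : Set (Equiv.Perm γ))) γ)

/-- The support of the cycle of `π` containing `x`. -/
def cycleSet (π : Equiv.Perm γ) (x : γ) : Set γ := {y | π.SameCycle x y}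

/-- The number of cycles of `π` meeting the set `S` (for invariant `S`,
the number of cycles of the restriction of `π` to `S`). -/
noncomputable def zcOn (π : Equiv.Perm γ) (S : Set γ) : ℕ :=
  (S.image fun x =>
    Quotient.mk (MulAction.orbitRel (Subgroup.zpowers π) γ) x).ncard

/-- `β` is a refinement of `α`: the support of every cycle of `α` is
`β`-invariant, and on the support `S` of each cycle of `α` the restriction
`βᵢ` of `β` satisfies the genus-zero condition `|S| + 1 = z(βᵢ) + z(βᵢ⁻¹αᵢ)`. -/
def IsRefinement (β α : Equiv.Perm γ) : Prop :=
  (∀ x, α.SameCycle x (β x)) ∧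
  ∀ x, Nat.card (cycleSet α x) + 1 =
    zcOn β (cycleSet α x) + zcOn (β⁻¹ * α) (cycleSet α x)

/-- The Whitney polynomial of a collection of hypermaps. -/
noncomputable def whitney {A : Type*} [CommRing A] (σ α : Equiv.Perm γ) (u v : A) : A :=
  ∑ β ∈ Finset.univ.filter (fun β => IsRefinement β α),
    u ^ (kappa σ β - kappa σ α) *
      v ^ (kappa σ β + Fintype.card γ - zc β - zc σ)

end Hypermap

namespace Hypermap

variable {γ : Type*} [Fintype γ] [DecidableEq γ]

/-- The Finset support of the cycle of `π` containing `x`. -/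
noncomputable def cycleFinset (π : Equiv.Perm γ) (x : γ) : Finset γ :=
  Finset.univ.filter (fun y => π.SameCycle x y)

/-- A flow on the collection of hypermaps `(σ,α)` with values in `K`: a
function whose values sum to zero over the support of every cycle of `σ` and
of every cycle of `α`. -/
def IsFlow {K : Type*} [Field K] (σ α : Equiv.Perm γ) (f : γ → K) : Prop :=
  (∀ x, ∑ i ∈ cycleFinset σ x, f i = 0) ∧
  (∀ x, ∑ i ∈ cycleFinset α x, f i = 0)

/-- The flows on `(σ,α)` form a `K`-vector space under pointwise operations. -/
noncomputable def flowSpace (K : Type*) [Field K] (σ α : Equiv.Perm γ) :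
    Submodule K (γ → K) where
  carrier := {f | IsFlow σ α f}
  add_mem' := by
    rintro f g ⟨hf1, hf2⟩ ⟨hg1, hg2⟩
    refine ⟨fun x => ?_, fun x => ?_⟩ <;>
      simp [Finset.sum_add_distrib, hf1 x, hf2 x, hg1 x, hg2 x]
  zero_mem' := by
    refine ⟨fun x => ?_, fun x => ?_⟩ <;> simp
  smul_mem' := by
    rintro a f ⟨hf1, hf2⟩
    refine ⟨fun x => ?_, fun x => ?_⟩ <;>
      simp [← Finset.mul_sum, hf1 x, hf2 x]

end Hypermap

namespace Hypermap

variable {γ : Type*}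

/-- The space of functions `γ → K` that are constant on the classes of `r`, encoded as the
pullback of the functions on the quotient. -/
def blockSpace (K : Type*) [Field K] (r : Setoid γ) : Submodule K (γ → K) :=
  LinearMap.range (LinearMap.funLeft K K (Quotient.mk r))

lemma mem_blockSpace {K : Type*} [Field K] {r : Setoid γ} {g : γ → K} :
    g ∈ blockSpace K r ↔ ∀ x y, r x y → g x = g y := by
  constructor
  · rintro ⟨h, rfl⟩ x y hxy
    simp only [LinearMap.funLeft_apply]
    rw [Quotient.sound hxy]
  · intro h
    exact ⟨Quotient.lift g h, rfl⟩

lemma finrank_blockSpace [Fintype γ] (K : Type*) [Field K] (r : Setoid γ) :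
    Module.finrank K (blockSpace K r) = Nat.card (Quotient r) := by
  rw [blockSpace, LinearMap.finrank_range_of_inj
    (LinearMap.funLeft_injective_of_surjective K K _ Quotient.mk_surjective),
    Module.finrank_fintype_fun_eq_card, Nat.card_eq_fintype_card]

/-- A function is orthogonal to all functions constant on the classes of `r` exactly when its
sum over each class vanishes: the indicators of the classes span those functions. -/
lemma orthogonal_blockSpace_iff [Fintype γ] {K : Type*} [Field K] {r : Setoid γ} {f : γ → K} :
    (∀ g ∈ blockSpace K r, ∑ i, g i * f i = 0) ↔
      ∀ x, ∑ i ∈ Finset.univ.filter (fun y => r x y), f i = 0 := by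
  constructor
  · intro h x
    have := h (fun y => if r x y then 1 else 0) (mem_blockSpace.2 fun y z hyz => by
      have : r x y ↔ r x z := ⟨fun h => r.trans h hyz, fun h => r.trans h (r.symm hyz)⟩
      simp only [this])
    simpa [Finset.sum_filter] using this
  · rintro h _ ⟨g, rfl⟩
    rw [← Finset.sum_fiberwise Finset.univ (Quotient.mk r)]
    refine Finset.sum_eq_zero fun q _ => ?_
    induction q using Quotient.inductionOn with | _ x
    have hx : Finset.univ.filter (fun y => Quotient.mk r y = Quotient.mk r x)
        = Finset.univ.filter (fun y => r x y) := by
      ext y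
      simp only [Finset.mem_filter, Finset.mem_univ, true_and]
      exact Quotient.eq.trans ⟨r.symm, r.symm⟩
    rw [← mul_zero (g (Quotient.mk r x)), ← h x, Finset.mul_sum, ← hx]
    refine Finset.sum_congr rfl fun y hy => ?_
    rw [LinearMap.funLeft_apply, (Finset.mem_filter.1 hy).2]

lemma orbitRel_zpowers_iff {π : Equiv.Perm γ} {x y : γ} :
    MulAction.orbitRel (Subgroup.zpowers π) γ x y ↔ π.SameCycle x y := by
  rw [Equiv.Perm.sameCycle_comm, MulAction.orbitRel_apply]
  constructor
  · rintro ⟨⟨_, k, rfl⟩, h⟩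
    exact ⟨k, h⟩
  · rintro ⟨k, h⟩
    exact ⟨⟨π ^ k, k, rfl⟩, h⟩

/-- A function is constant on the orbits of a group generated by `S` as soon as it is invariant
under each element of `S`. -/
lemma mem_blockSpace_closure {K : Type*} [Field K] {S : Set (Equiv.Perm γ)} {g : γ → K} :
    g ∈ blockSpace K (MulAction.orbitRel (Subgroup.closure S) γ) ↔
      ∀ π ∈ S, ∀ x, g (π x) = g x := by
  rw [mem_blockSpace]
  constructor
  · intro h π hπ x
    exact h _ _ ⟨⟨π, Subgroup.subset_closure hπ⟩, rfl⟩
  · rintro h _ y ⟨⟨π, hπ⟩, rfl⟩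
    change g (π y) = g y
    induction hπ using Subgroup.closure_induction generalizing y with
    | mem π hπ => exact h π hπ y
    | one => rfl
    | mul a b _ _ ha hb => rw [Equiv.Perm.mul_apply, ha, hb]
    | inv a _ ha => simpa using (ha (a⁻¹ y)).symm

/-- Functions constant on the cycles of both `σ` and `α` are those constant on the connected
components. -/
lemma blockSpace_inf (K : Type*) [Field K] (σ α : Equiv.Perm γ) :
    blockSpace K (MulAction.orbitRel (Subgroup.zpowers σ) γ) ⊓
        blockSpace K (MulAction.orbitRel (Subgroup.zpowers α) γ) =
      blockSpace K (MulAction.orbitRel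
        (Subgroup.closure ({σ, α} : Set (Equiv.Perm γ))) γ) := by
  ext g
  rw [Submodule.mem_inf, Subgroup.zpowers_eq_closure, Subgroup.zpowers_eq_closure,
    mem_blockSpace_closure, mem_blockSpace_closure, mem_blockSpace_closure]
  simp

/-- The flow space is the orthogonal complement, for the dot product, of the sum of the two
spaces of functions constant on the cycles of `σ`, respectively of `α`. -/
lemma flowSpace_eq_orthogonal [Fintype γ] [DecidableEq γ] (K : Type*) [Field K]
    (σ α : Equiv.Perm γ) :
    flowSpace K σ α = (Matrix.toBilin' (1 : Matrix γ γ K)).orthogonal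
      (blockSpace K (MulAction.orbitRel (Subgroup.zpowers σ) γ) ⊔
        blockSpace K (MulAction.orbitRel (Subgroup.zpowers α) γ)) := by
  ext f
  have hperp : ∀ π : Equiv.Perm γ,
      (∀ x, ∑ i ∈ cycleFinset π x, f i = 0) ↔
        ∀ g ∈ blockSpace K (MulAction.orbitRel (Subgroup.zpowers π) γ),
          Matrix.toBilin' (1 : Matrix γ γ K) g f = 0 := by
    intro π
    simp only [Matrix.toBilin'_apply', Matrix.one_mulVec, dotProduct]
    rw [orthogonal_blockSpace_iff]
    simp only [orbitRel_zpowers_iff, cycleFinset]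
  change IsFlow σ α f ↔ ∀ g ∈ _, Matrix.toBilin' (1 : Matrix γ γ K) g f = 0
  rw [IsFlow, hperp σ, hperp α]
  constructor
  · rintro ⟨h₁, h₂⟩ g hg
    obtain ⟨a, ha, b, hb, rfl⟩ := Submodule.mem_sup.1 hg
    rw [map_add, LinearMap.add_apply, h₁ a ha, h₂ b hb, add_zero]
  · intro h
    exact ⟨fun g hg => h g (Submodule.mem_sup_left hg),
      fun g hg => h g (Submodule.mem_sup_right hg)⟩

lemma finrank_flowSpace [Fintype γ] [DecidableEq γ] (K : Type*) [Field K]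
    (σ α : Equiv.Perm γ) :
    Module.finrank K (flowSpace K σ α) + zc σ + zc α = Fintype.card γ + kappa σ α := by
  have hσ : _ = zc σ := finrank_blockSpace K (MulAction.orbitRel (Subgroup.zpowers σ) γ)
  have hα : _ = zc α := finrank_blockSpace K (MulAction.orbitRel (Subgroup.zpowers α) γ)
  have hκ : _ = kappa σ α := finrank_blockSpace K
    (MulAction.orbitRel (Subgroup.closure ({σ, α} : Set (Equiv.Perm γ))) γ)
  have hsum := Submodule.finrank_sup_add_finrank_inf_eq
    (blockSpace K (MulAction.orbitRel (Subgroup.zpowers σ) γ))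
    (blockSpace K (MulAction.orbitRel (Subgroup.zpowers α) γ))
  rw [blockSpace_inf, hσ, hα, hκ] at hsum
  have hnd : (Matrix.toBilin' (1 : Matrix γ γ K)).Nondegenerate :=
    LinearMap.BilinForm.nondegenerate_toBilin'_of_det_ne_zero' _ (by simp)
  have horth := LinearMap.BilinForm.finrank_orthogonal hnd
    (blockSpace K (MulAction.orbitRel (Subgroup.zpowers σ) γ) ⊔
      blockSpace K (MulAction.orbitRel (Subgroup.zpowers α) γ))
  have hle := Submodule.finrank_le
    (blockSpace K (MulAction.orbitRel (Subgroup.zpowers σ) γ) ⊔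
      blockSpace K (MulAction.orbitRel (Subgroup.zpowers α) γ))
  rw [Module.finrank_fintype_fun_eq_card] at horth hle
  rw [flowSpace_eq_orthogonal, horth]
  omega

end Hypermap

open Hypermap in
/-- Cori–Machì: the space of flows on a collection of hypermaps
`(σ,α)` has dimension `n + κ(σ,α) − z(σ) − z(α)` (stated additively), and over
a finite field with `q` elements the number of flows is
`q^{n+κ(σ,α)−z(σ)−z(α)}`. -/
theorem flow_space_dimension
    {γ : Type*} [Fintype γ] [DecidableEq γ] (σ α : Equiv.Perm γ)
    (K : Type*) [Field K] :
    (Module.finrank K (flowSpace K σ α) + zc σ + zc α =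
      Fintype.card γ + kappa σ α) ∧
    (∀ (_ : Fintype K) (q : ℕ), Fintype.card K = q →
      Nat.card {f : γ → K // IsFlow σ α f} =
        q ^ (Fintype.card γ + kappa σ α - zc σ - zc α)) := by
  refine ⟨finrank_flowSpace K σ α, ?_⟩
  rintro _ q rfl
  have hcard : Nat.card {f : γ → K // IsFlow σ α f} = Nat.card (flowSpace K σ α) := rfl
  have hdim := finrank_flowSpace K σ α
  rw [hcard, Module.natCard_eq_pow_finrank (K := K), Nat.card_eq_fintype_card]
  congr 1
  omega
end

section
/- Let K be a finite field with q elements and let (σ,α) be a collection of hypermaps on {1,…,n} such that each cycle of α has at most three elements. Then C(σ,α;q) equals the number of nowhere zero flows f : {1,…,n} → K on (σ,α), i.e. the number of flows f such that f(i) = 0 implies that i is a fixed point of α. -/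
/-!
The argument has three ingredients.

*Counting flows.* The flows on `(σ, β)` are the kernel of the incidence matrix whose rows are the
cycles of `σ` and of `β` and whose columns are the points. The kernel of its transpose consists of
the functions constant on connected components (up to a sign on the `β`-rows), so it has dimension
`κ(σ, β)`; as a matrix and its transpose have the same rank, there are
`q ^ (n + κ(σ, β) - z(β) - z(σ))` flows on `(σ, β)` (`card_flows`). Hence the left-hand side is the
sum over all `f : γ → K` of `∑ μ(β, α)`, over those `β ≤ α` for which `f` is a flow on `(σ, β)`.

*Refinements of permutations with short cycles.* If the cycles of `c` have at most three elements,
the only permutations preserving the cycles of `c` that fail the genus condition are those which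
equal `c⁻¹` on some 3-cycle of `c` (`isRefinement_iff`). In particular, among refinements of a fixed
`α` with short cycles, `a ≤ c` just means that `a` preserves the cycles of `c`
(`Good.of_preserves`), and refinement is transitive there. Transitivity makes the
recurrence `∑_{a ≤ c ≤ b} μ(a, c) = δ` a matrix identity `M * Z = 1`; the reversed identity
`Z * M = 1` is the dual recurrence `∑_{b ≤ c ≤ α} μ(c, α) = δ` (`mobius_dual`).

*Minimal refinement carrying a flow.* For a flow `f` on `(σ, α)`, let `b` be the first return map
of `α` to the support of `f`, fixing the zeros of `f`. Then for `β ≤ α` the function `f` is a flow on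
`(σ, β)` exactly when `b ≤ β` (`exists_minimal`): a cycle of `α` has at most three elements, so no
proper nonempty part of the support of `f` inside it has sum zero. By the dual
recurrence the coefficient of `f` is `1` if `b = α` and `0` otherwise, and `b = α` says that `f` is
nowhere zero.
-/


open scoped Classical

namespace Hypermap

variable {γ : Type*} [Fintype γ] [DecidableEq γ]

/-- The interval `[a, b]` in the partial order of refinements. -/
noncomputable def refInterval (a b : Equiv.Perm γ) : Finset (Equiv.Perm γ) :=
  Finset.univ.filter (fun c => IsRefinement a c ∧ IsRefinement c b)

/-- `mu` is the Möbius function of the refinement order: it satisfies the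
defining recurrence `Σ_{a ≤ c ≤ b} μ(a,c) = δ_{a,b}` on every interval. -/
def IsMobius (mu : Equiv.Perm γ → Equiv.Perm γ → ℤ) : Prop :=
  ∀ a b : Equiv.Perm γ, IsRefinement a b →
    ∑ c ∈ refInterval a b, mu a c = if a = b then 1 else 0

end Hypermap

namespace Hypermap

/-! ### The number of flows -/

/-- The number of functions on the edges of a bipartite graph that sum to zero around every vertex:
`γ` is the set of edges, `s` and `t` send an edge to its two ends, and `u` to its connected component.
The hypothesis `hinv` says that the fibres of `u` are no coarser than what `s` and `t` generate. -/
lemma card_flows_aux {K : Type*} [Field K] [Fintype K] {γ X Y Z : Type*} [Fintype γ] [Finite X]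
    [Finite Y] [Finite Z] (s : γ → X) (t : γ → Y) (u : γ → Z)
    (hs : Function.Surjective s) (ht : Function.Surjective t) (hu : Function.Surjective u)
    (hsu : ∀ i j, s i = s j → u i = u j) (htu : ∀ i j, t i = t j → u i = u j)
    (hinv : ∀ h : γ → K, (∀ i j, s i = s j → h i = h j) → (∀ i j, t i = t j → h i = h j) →
      ∀ i j, u i = u j → h i = h j) :
    Nat.card {f : γ → K // (∀ x, ∑ j with s j = s x, f j = 0) ∧
        ∀ x, ∑ j with t j = t x, f j = 0} =
      Fintype.card K ^ (Fintype.card γ + Nat.card Z - Nat.card Y - Nat.card X) := by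
  have := Fintype.ofFinite X
  have := Fintype.ofFinite Y
  have := Fintype.ofFinite Z
  let A : Matrix (X ⊕ Y) γ K := Matrix.of fun e j =>
    Sum.elim (fun i => if s j = i then 1 else 0) (fun i => if t j = i then 1 else 0) e
  have hker : ∀ f : γ → K, f ∈ LinearMap.ker A.mulVecLin ↔
      (∀ x, ∑ j with s j = s x, f j = 0) ∧ ∀ x, ∑ j with t j = t x, f j = 0 := by
    intro f
    rw [LinearMap.mem_ker, Matrix.mulVecLin_apply, funext_iff, Sum.forall, hs.forall, ht.forall]
    simp [A, Matrix.mulVec, dotProduct, Finset.sum_filter]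
  have hkerT : ∀ w : X ⊕ Y → K, w ∈ LinearMap.ker A.transpose.mulVecLin ↔
      ∀ j, w (.inl (s j)) + w (.inr (t j)) = 0 := by
    intro w
    rw [LinearMap.mem_ker, Matrix.mulVecLin_apply, funext_iff]
    simp [A, Matrix.mulVec, dotProduct]
  -- `L` identifies the functions on components with the kernel of the transposed matrix.
  let L : (Z → K) →ₗ[K] (X ⊕ Y → K) :=
    { toFun := fun h => Sum.elim (fun i => h (u (Function.surjInv hs i)))
        (fun i => - h (u (Function.surjInv ht i)))
      map_add' := by
        intro a b; ext (i | i) <;> simp; ring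
      map_smul' := by
        intro a b; ext (i | i) <;> simp }
  have us : ∀ j, u (Function.surjInv hs (s j)) = u j := fun j =>
    hsu _ _ (Function.surjInv_eq hs _)
  have ut : ∀ j, u (Function.surjInv ht (t j)) = u j := fun j =>
    htu _ _ (Function.surjInv_eq ht _)
  have hLinj : Function.Injective L := by
    intro a b hab
    ext z
    obtain ⟨j, rfl⟩ := hu z
    have := congrFun hab (.inl (s j))
    simpa [L, us] using this
  have hLrange : LinearMap.range L = LinearMap.ker A.transpose.mulVecLin := by
    ext w
    rw [hkerT, LinearMap.mem_range]
    constructor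
    · rintro ⟨h, rfl⟩ j
      simp [L, us, ut]
    · intro hw
      have hc := hinv (fun j => w (.inl (s j))) (fun i j h => by simp [h])
        (fun i j h => by
          have h1 := hw i
          have h2 := hw j
          rw [h] at h1
          exact add_right_cancel (h1.trans h2.symm))
      have hval : ∀ j, w (.inl (s (Function.surjInv hu (u j)))) = w (.inl (s j)) := fun j =>
        hc _ _ (Function.surjInv_eq hu _)
      refine ⟨fun z => w (.inl (s (Function.surjInv hu z))), ?_⟩
      ext (i | i)
      · obtain ⟨j, rfl⟩ := hs i
        simp only [L, LinearMap.coe_mk, AddHom.coe_mk, Sum.elim_inl]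
        rw [us, hval]
      · obtain ⟨j, rfl⟩ := ht i
        simp only [L, LinearMap.coe_mk, AddHom.coe_mk, Sum.elim_inr]
        rw [ut, hval]
        exact neg_eq_of_add_eq_zero_right (hw j)
  have d1 : Module.finrank K (LinearMap.ker A.transpose.mulVecLin) = Nat.card Z := by
    rw [← hLrange, LinearMap.finrank_range_of_inj hLinj, Module.finrank_fintype_fun_eq_card,
      Nat.card_eq_fintype_card]
  have d2 := LinearMap.finrank_range_add_finrank_ker A.transpose.mulVecLin
  have d3 := LinearMap.finrank_range_add_finrank_ker A.mulVecLin
  have d4 : Module.finrank K (LinearMap.range A.transpose.mulVecLin) =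
      Module.finrank K (LinearMap.range A.mulVecLin) := Matrix.rank_transpose A
  rw [Module.finrank_fintype_fun_eq_card] at d2 d3
  rw [Fintype.card_sum] at d2
  have e : Nat.card {f : γ → K // (∀ x, ∑ j with s j = s x, f j = 0) ∧
        ∀ x, ∑ j with t j = t x, f j = 0} = Nat.card (LinearMap.ker A.mulVecLin) :=
    Nat.card_congr (Equiv.subtypeEquivRight fun f => (hker f).symm)
  rw [e, Nat.card_eq_fintype_card, Module.card_eq_pow_finrank (K := K)]
  congr 1
  rw [Nat.card_eq_fintype_card] at d1
  simp only [Nat.card_eq_fintype_card]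
  omega

lemma mk_eq_iff {γ : Type*} (π : Equiv.Perm γ) (x y : γ) :
    (Quotient.mk (MulAction.orbitRel (Subgroup.zpowers π) γ) x =
      Quotient.mk (MulAction.orbitRel (Subgroup.zpowers π) γ) y) ↔ π.SameCycle x y := by
  rw [Quotient.eq, MulAction.orbitRel_apply, Equiv.Perm.sameCycle_comm]
  constructor
  · rintro ⟨⟨_, n, rfl⟩, rfl⟩
    exact ⟨n, rfl⟩
  · rintro ⟨n, rfl⟩
    exact ⟨⟨π ^ n, n, rfl⟩, rfl⟩

variable {γ : Type*} [Fintype γ] [DecidableEq γ]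

/-- The truncated subtractions in the exponent lose nothing: it is the dimension of the flow
space. -/
lemma card_flows {K : Type*} [Field K] [Fintype K] (σ β : Equiv.Perm γ) :
    Nat.card {f : γ → K // IsFlow σ β f} =
      Fintype.card K ^ (Fintype.card γ + kappa σ β - zc β - zc σ) := by
  have := card_flows_aux (K := K) (Quotient.mk (MulAction.orbitRel (Subgroup.zpowers σ) γ))
    (Quotient.mk (MulAction.orbitRel (Subgroup.zpowers β) γ))
    (Quotient.mk (MulAction.orbitRel (Subgroup.closure ({σ, β} : Set (Equiv.Perm γ))) γ))
    Quotient.mk_surjective Quotient.mk_surjective Quotient.mk_surjective ?_ ?_ ?_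
  · refine Eq.trans (Nat.card_congr (Equiv.subtypeEquivRight fun f => ?_)) this
    simp only [mk_eq_iff, IsFlow, cycleFinset]
    simp only [Equiv.Perm.sameCycle_comm]
  · intro i j h
    rw [mk_eq_iff] at h
    obtain ⟨n, rfl⟩ := h.symm
    refine Quotient.sound ⟨⟨σ ^ n, ?_⟩, rfl⟩
    exact Subgroup.zpow_mem _ (Subgroup.subset_closure (by simp)) n
  · intro i j h
    rw [mk_eq_iff] at h
    obtain ⟨n, rfl⟩ := h.symm
    refine Quotient.sound ⟨⟨β ^ n, ?_⟩, rfl⟩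
    exact Subgroup.zpow_mem _ (Subgroup.subset_closure (by simp)) n
  · intro h h1 h2 i j hij
    obtain ⟨⟨g, hg⟩, rfl⟩ := Quotient.exact hij
    change h (g j) = h j
    clear hij
    induction hg using Subgroup.closure_induction generalizing j with
    | mem g hg =>
      rcases hg with rfl | rfl
      · exact h1 _ _ ((mk_eq_iff _ _ _).2 (Equiv.Perm.sameCycle_apply_left.2 .rfl))
      · exact h2 _ _ ((mk_eq_iff _ _ _).2 (Equiv.Perm.sameCycle_apply_left.2 .rfl))
    | one => rfl
    | mul a b _ _ iha ihb => rw [Equiv.Perm.mul_apply, iha, ihb]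
    | inv a _ ih => simpa using (ih (a⁻¹ j)).symm

end Hypermap

namespace Hypermap

/-! ### Refinements of permutations with short cycles -/

section Counting

variable {γ : Type*} {π : Equiv.Perm γ} {x y z : γ}

lemma sc_step (h : π x = y) : π.SameCycle x y := h ▸ (Equiv.Perm.sameCycle_apply_right.2 .rfl)

lemma sc_apply (α : Equiv.Perm γ) (x : γ) : α.SameCycle x (α x) := sc_step rfl

lemma sc_sq (α : Equiv.Perm γ) (x : γ) : α.SameCycle x (α (α x)) :=
  (sc_apply α x).trans (sc_apply α _)

/-- `a` maps each cycle of `c` to itself, and is not the inverse of `c` on any 3-cycle of `c`.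
When the cycles of `c` have at most three elements, `c (c x) ≠ x` says that `x` lies on a
3-cycle, and two values of `a` on it determine the third. -/
def Good (a c : Equiv.Perm γ) : Prop :=
  (∀ x, c.SameCycle x (a x)) ∧ ∀ x, c (c x) ≠ x → a x = c (c x) → a (c x) ≠ x

lemma Good.refl (c : Equiv.Perm γ) : Good c c :=
  ⟨sc_apply c, fun _ h2 h _ => h2 (h.symm.trans (c.injective h).symm)⟩

lemma Good.one (c : Equiv.Perm γ) : Good 1 c :=
  ⟨fun _ => .rfl, fun _ h h' _ => h h'.symm⟩

lemma zcOn_single : zcOn π {x} = 1 := by simp [zcOn]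

lemma zcOn_pair : zcOn π {x, y} = if π.SameCycle x y then 1 else 2 := by
  unfold zcOn
  rw [Set.image_pair]
  split_ifs with h
  · rw [(mk_eq_iff π x y).2 h]; simp
  · exact Set.ncard_pair (mt (mk_eq_iff π x y).1 h)

lemma zcOn_triple_one (h1 : π x = y) (h2 : π y = z) : zcOn π {x, y, z} = 1 := by
  unfold zcOn
  rw [Set.image_insert_eq, Set.image_pair, (mk_eq_iff π x y).2 (sc_step h1),
    (mk_eq_iff π y z).2 (sc_step h2)]
  simp

lemma zcOn_triple_two (hxy : x ≠ y) (hx : π x = x) (hy : π y = z) :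
    zcOn π {x, y, z} = 2 := by
  unfold zcOn
  rw [Set.image_insert_eq, Set.image_pair, ← (mk_eq_iff π y z).2 (sc_step hy)]
  have : (Quotient.mk (MulAction.orbitRel (Subgroup.zpowers π) γ) x) ≠
      Quotient.mk (MulAction.orbitRel (Subgroup.zpowers π) γ) y :=
    fun h => hxy (((mk_eq_iff π x y).1 h).eq_of_left hx)
  rw [Set.pair_eq_singleton, Set.ncard_pair this]

lemma zcOn_triple_three (hxy : x ≠ y) (hxz : x ≠ z) (hyz : y ≠ z) (hx : π x = x) (hy : π y = y) :
    zcOn π {x, y, z} = 3 := by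
  unfold zcOn
  rw [Set.image_insert_eq, Set.image_pair]
  refine Set.ncard_eq_three.2 ⟨_, _, _, ?_, ?_, ?_, rfl⟩
  · exact fun h => hxy (((mk_eq_iff π x y).1 h).eq_of_left hx)
  · exact fun h => hxz (((mk_eq_iff π x z).1 h).eq_of_left hx)
  · exact fun h => hyz (((mk_eq_iff π y z).1 h).eq_of_left hy)

lemma triple_rot (x y z : γ) : ({x, y, z} : Set γ) = {y, z, x} := by
  ext; simp; tauto

/-- Of the six permutations of the support of a 3-cycle, only the inverse cycle violates the genus
condition. -/
lemma genus_triple {a c : Equiv.Perm γ} (hxy : x ≠ y) (hxz : x ≠ z) (hyz : y ≠ z)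
    (hx : c x = y) (hy : c y = z) (hz : c z = x)
    (ax : a x = x ∨ a x = y ∨ a x = z) (ay : a y = x ∨ a y = y ∨ a y = z)
    (az : a z = x ∨ a z = y ∨ a z = z) :
    3 + 1 = zcOn a {x, y, z} + zcOn (a⁻¹ * c) {x, y, z} ↔ ¬ (a x = z ∧ a y = x) := by
  have key : ∀ {p q r : γ}, c p = q → a r = q → (a⁻¹ * c) p = r := by
    intro p q r h1 h2
    rw [Equiv.Perm.mul_apply, Equiv.Perm.inv_eq_iff_eq, h1, h2]
  have inj : ∀ {p q r : γ}, a p = r → a q = r → p = q := fun h1 h2 =>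
    a.injective (h1.trans h2.symm)
  rcases ax with ax | ax | ax
  · rcases ay with ay | ay | ay
    · exact absurd (inj ax ay) hxy
    · rcases az with az | az | az
      · exact absurd (inj ax az) hxz
      · exact absurd (inj ay az) hyz
      · rw [zcOn_triple_three hxy hxz hyz ax ay, zcOn_triple_one (key hx ay) (key hy az)]
        simp [ax, hxz]
    · rcases az with az | az | az
      · exact absurd (inj ax az) hxz
      · have h1 := key hy ay
        have h2 := key hx az
        have h3 := key hz ax
        rw [zcOn_triple_two hxy ax ay, triple_rot, zcOn_triple_two hyz h1 h3]
        simp [ax, hxz]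
      · exact absurd (inj ay az) hyz
  · rcases ay with ay | ay | ay
    · rcases az with az | az | az
      · exact absurd (inj ay az) hyz
      · exact absurd (inj ax az) hxz
      · have h1 := key hx ax
        have h2 := key hz ay
        have h3 := key hy az
        rw [zcOn_triple_two hxy h1 h3, triple_rot, triple_rot,
          zcOn_triple_two hxz.symm az ax]
        simp [ax, hyz]
    · exact absurd (inj ax ay) hxy
    · rcases az with az | az | az
      · rw [zcOn_triple_one ax ay, zcOn_triple_three hxy hxz hyz (key hx ax) (key hy ay)]
        simp [ax, hyz]
      · exact absurd (inj ax az) hxz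
      · exact absurd (inj ay az) hyz
  · rcases ay with ay | ay | ay
    · rcases az with az | az | az
      · exact absurd (inj ay az) hyz
      · have h1 := key hx az
        have h2 := key hz ay
        rw [Set.pair_comm y z, zcOn_triple_one ax az, zcOn_triple_one h1 h2]
        simp [ax, ay]
      · exact absurd (inj ax az) hxz
    · rcases az with az | az | az
      · have h1 := key hz az
        have h2 := key hx ay
        rw [triple_rot x y z, zcOn_triple_two hyz ay az, triple_rot y z x,
          zcOn_triple_two hxz.symm h1 h2]
        simp [ay, hxy.symm]
      · exact absurd (inj ay az) hyz
      · exact absurd (inj ax az) hxz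
    · exact absurd (inj ax ay) hxy

end Counting

variable {γ : Type*} [Fintype γ] {α a b c : Equiv.Perm γ}

lemma return_of_card (x : γ) (h : Nat.card (cycleSet α x) ≤ 3) :
    α x = x ∨ α (α x) = x ∨ α (α (α x)) = x := by
  by_contra! hne
  obtain ⟨h1, h2, h3⟩ := hne
  have hs : ({x, α x, α (α x), α (α (α x))} : Finset γ).card = 4 := by
    rw [Finset.card_insert_of_notMem, Finset.card_insert_of_notMem, Finset.card_pair]
    · intro h; exact h1 (α.injective (α.injective h)).symm
    · simp only [Finset.mem_insert, Finset.mem_singleton, EmbeddingLike.apply_eq_iff_eq]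
      rintro (h | h)
      exacts [h1 h.symm, h2 h.symm]
    · simp only [Finset.mem_insert, Finset.mem_singleton]
      rintro (h | h | h)
      exacts [h1 h.symm, h2 h.symm, h3 h.symm]
  have hsub : (({x, α x, α (α x), α (α (α x))} : Finset γ) : Set γ) ⊆ cycleSet α x := by
    intro y hy
    simp only [Finset.coe_insert, Finset.coe_singleton, Set.mem_insert_iff,
      Set.mem_singleton_iff] at hy
    rcases hy with rfl | rfl | rfl | rfl
    exacts [.rfl, sc_apply _ _, sc_sq _ _, (sc_apply _ _).trans (sc_sq _ _)]
  have := Set.ncard_le_ncard hsub (Set.toFinite _)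
  rw [Set.ncard_coe_finset, hs, ← Nat.card_coe_set_eq] at this
  omega

/-- The cycles of `c` have at most three elements. -/
def Short (c : Equiv.Perm γ) : Prop := ∀ x, Nat.card (cycleSet c x) ≤ 3

lemma Short.mem_iff (h : Short α) {x y : γ} :
    α.SameCycle x y ↔ y = x ∨ y = α x ∨ y = α (α x) := by
  constructor
  · intro hxy
    obtain ⟨n, rfl⟩ := hxy.exists_nat_pow_eq
    induction n with
    | zero => simp
    | succ n ih =>
      rw [pow_succ', Equiv.Perm.mul_apply]
      have := return_of_card x (h x)
      rcases ih ⟨n, by simp⟩ with e | e | e <;> rw [e]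
      · simp
      · simp
      · rcases this with h | h | h
        · simp [h]
        · simp [h]
        · simp [h]
  · rintro (rfl | rfl | rfl)
    exacts [.rfl, sc_apply _ _, sc_sq _ _]

lemma Short.cube (h : Short α) {x : γ} (hx : α (α x) ≠ x) : α (α (α x)) = x := by
  rcases return_of_card x (h x) with h | h | h
  · exact absurd (by rw [h, h]) hx
  · exact absurd h hx
  · exact h

lemma Short.cycleSet_eq (h : Short α) (x : γ) : cycleSet α x = {x, α x, α (α x)} := by
  ext y
  simpa [cycleSet] using h.mem_iff

lemma sameCycle_of_preserves (h : ∀ x, α.SameCycle x (c x)) {x y : γ} (hxy : c.SameCycle x y) :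
    α.SameCycle x y := by
  obtain ⟨n, rfl⟩ := hxy.exists_nat_pow_eq
  clear hxy
  induction n with
  | zero => exact .rfl
  | succ n ih =>
    rw [pow_succ', Equiv.Perm.mul_apply]
    exact ih.trans (h _)

lemma Short.of_preserves (hα : Short α) (h : ∀ x, α.SameCycle x (c x)) : Short c := fun x =>
  (Nat.card_mono (Set.toFinite _) fun _ hy => sameCycle_of_preserves h hy).trans (hα x)

lemma isRefinement_iff (hc : Short c) : IsRefinement a c ↔ Good a c := by
  refine and_congr_right fun hp => forall_congr' fun x => ?_
  have hset := hc.cycleSet_eq x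
  by_cases h2 : c (c x) = x
  · simp only [h2, ne_eq, not_true_eq_false, false_implies, iff_true]
    by_cases h1 : c x = x
    · have : cycleSet c x = {x} := by simp [hset, h1]
      rw [this, zcOn_single, zcOn_single]; simp
    · have hs : cycleSet c x = {x, c x} := by
        rw [hset, h2]; ext; simp; tauto
      rw [hs, zcOn_pair, zcOn_pair, Nat.card_coe_set_eq, Set.ncard_pair (Ne.symm h1)]
      have hx := hc.mem_iff.1 (hp x)
      have hy := hc.mem_iff.1 (hp (c x))
      simp only [h2] at hx hy
      have hx' : a x = x ∨ a x = c x := by tauto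
      have hy' : a (c x) = x ∨ a (c x) = c x := by tauto
      rcases hx' with hx' | hx'
      · have e : a (c x) = c x := hy'.resolve_left fun h =>
          h1 (a.injective (h.trans hx'.symm))
        have s1 : ¬ a.SameCycle x (c x) := fun h => h1 (h.eq_of_left hx').symm
        have s2 : (a⁻¹ * c).SameCycle x (c x) := sc_step (by
          rw [Equiv.Perm.mul_apply, Equiv.Perm.inv_eq_iff_eq, e])
        rw [if_neg s1, if_pos s2]
      · have s1 : a.SameCycle x (c x) := sc_step hx'
        have s2 : ¬ (a⁻¹ * c).SameCycle x (c x) := fun h => h1 (h.eq_of_left (by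
          change (a⁻¹ * c) x = x
          rw [Equiv.Perm.mul_apply, Equiv.Perm.inv_eq_iff_eq, hx'])).symm
        rw [if_pos s1, if_neg s2]
  · have h3 := hc.cube h2
    have h1 : c x ≠ x := fun h => h2 (by rw [h, h])
    have h4 : c x ≠ c (c x) := fun h => h1 (c.injective h).symm
    have mx := hc.mem_iff.1 (hp x)
    have my := hc.mem_iff.1 (hp (c x))
    have mz := hc.mem_iff.1 (hp (c (c x)))
    simp only [h3] at my mz
    have := genus_triple (a := a) h1.symm (Ne.symm h2) h4 rfl rfl h3 mx (by tauto) (by tauto)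
    have hcard : ({x, c x, c (c x)} : Set γ).ncard = 3 :=
      Set.ncard_eq_three.2 ⟨_, _, _, h1.symm, Ne.symm h2, h4, rfl⟩
    rw [hset, Nat.card_coe_set_eq, hcard, this]
    simp [h2]

/-- Restricted transitivity: if `a` were `α⁻¹` on a 3-cycle of `α`, then `b`, whose cycles `a`
preserves, would be transitive there, hence equal to `α`, against `a ≤ b`. -/
lemma Good.trans (hα : Short α) (hab : Good a b) (hb : Good b α) : Good a α := by
  refine ⟨fun x => sameCycle_of_preserves hb.1 (hab.1 x), fun x h2 e1 e2 => ?_⟩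
  have h3 := hα.cube h2
  have h1 : α x ≠ x := fun h => h2 (by rw [h, h])
  have h4 : α x ≠ α (α x) := fun h => h1 (α.injective h).symm
  -- The `b`-cycle of `x` is the whole `α`-cycle, so `b` has no fixed point on it.
  have s1 : b.SameCycle x (α (α x)) := e1 ▸ hab.1 x
  have s2 : b.SameCycle (α x) x := by simpa only [e2] using hab.1 (α x)
  have f1 : b x ≠ x := fun h => h2 (s1.eq_of_left h).symm
  have f2 : b (α x) ≠ α x := fun h => h1 (s2.eq_of_left h)
  have f3 : b (α (α x)) ≠ α (α x) := fun h => h2 (s1.eq_of_right h).symm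
  have m2 := hα.mem_iff.1 (hb.1 (α x))
  rw [h3] at m2
  rcases hα.mem_iff.1 (hb.1 x) with h | h | h
  · exact f1 h
  · have hx2 : b (α x) = α (α x) := by
      rcases m2 with m | m | m
      · exact absurd m f2
      · exact m
      · refine absurd ?_ f3
        have m3 := hα.mem_iff.1 (hb.1 (α (α x)))
        rw [h3] at m3
        rcases m3 with m' | m' | m'
        · exact m'
        · exact absurd (b.injective (m'.trans m.symm)).symm h4
        · exact absurd (b.injective (m'.trans h.symm)) h2
    refine hab.2 x ?_ ?_ ?_
    · rwa [h, hx2]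
    · rw [h, hx2, e1]
    · rw [h, e2]
  · rcases m2 with m | m | m
    · exact f2 m
    · exact h1 (b.injective (m.trans h.symm))
    · exact hb.2 x h2 h m

/-- Below `α`, preserving cycles is enough for refinement: a 3-cycle of `c` is a 3-cycle of `α`, and
`c` agrees with `α` on it. -/
lemma Good.of_preserves (hα : Short α) (ha : Good a α) (hc : Good c α)
    (h : ∀ x, c.SameCycle x (a x)) : Good a c := by
  refine ⟨h, fun x h2 e1 e2 => ?_⟩
  have h1 : c x ≠ x := fun h => h2 (by rw [h, h])
  have h4 : c x ≠ c (c x) := fun h => h1 (c.injective h).symm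
  have m2 := hα.mem_iff.1 ((hc.1 x).trans (hc.1 (c x)))
  rcases hα.mem_iff.1 (hc.1 x) with m | m | m
  · exact h1 m
  · rcases m2 with n | n | n
    · exact h2 n
    · exact h4 (m.trans n.symm)
    · exact ha.2 x (n ▸ h2) (e1.trans n) (m ▸ e2)
  · rcases m2 with n | n | n
    · exact h2 n
    · have hα2 : α (α x) ≠ x := m ▸ h1
      have h3 := hα.cube hα2
      have m3 := hα.mem_iff.1 (hc.1 (α x))
      rw [h3] at m3
      refine hc.2 x hα2 m ?_
      rcases m3 with k | k | k
      · exact absurd (c.injective (k.trans n.symm)) (by rw [← n]; exact h4.symm)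
      · exact absurd (c.injective (k.trans m.symm)) (by rw [← n]; exact h2)
      · exact k
    · exact h4 (m.trans n.symm)

end Hypermap

namespace Hypermap

/-! ### The dual Möbius recurrence and the minimal refinement of a flow -/

variable {γ : Type*} [Fintype γ] [DecidableEq γ]

/-- The Möbius recurrence in the first argument, obtained because a left inverse of the zeta matrix
of the refinements of `α` is also a right inverse. -/
lemma mobius_dual {α b : Equiv.Perm γ} (hα : Short α)
    {mu : Equiv.Perm γ → Equiv.Perm γ → ℤ} (hmu : IsMobius mu) (hb : IsRefinement b α) :
    ∑ c ∈ refInterval b α, mu c α = if b = α then 1 else 0 := by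
  let P := {c : Equiv.Perm γ // IsRefinement c α}
  have hP : ∀ c : P, Good c.1 α := fun c => (isRefinement_iff hα).1 c.2
  have hS : ∀ c : P, Short c.1 := fun c => hα.of_preserves (hP c).1
  have hsum : ∀ (a d : P) (F : Equiv.Perm γ → ℤ), ∑ c ∈ refInterval a.1 d.1, F c =
      ∑ c : P, if IsRefinement a.1 c.1 ∧ IsRefinement c.1 d.1 then F c.1 else 0 := by
    intro a d F
    rw [← Finset.sum_subtype (Finset.univ.filter fun c => IsRefinement c α) (by simp)
      (fun c => if IsRefinement a.1 c ∧ IsRefinement c d.1 then F c else 0),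
      ← Finset.sum_filter]
    refine Finset.sum_congr ?_ fun _ _ => rfl
    ext c
    simp only [refInterval, Finset.mem_filter, Finset.mem_univ, true_and]
    refine ⟨fun h => ⟨?_, h⟩, fun h => h.2⟩
    exact (isRefinement_iff hα).2 (((isRefinement_iff (hS d)).1 h.2).trans hα (hP d))
  let Z : Matrix P P ℤ := .of fun a c => if IsRefinement a.1 c.1 then 1 else 0
  let M : Matrix P P ℤ := .of fun a c => if IsRefinement a.1 c.1 then mu a.1 c.1 else 0
  have hMZ : M * Z = 1 := by
    ext a d
    have h1 : (M * Z) a d = ∑ c ∈ refInterval a.1 d.1, mu a.1 c := by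
      rw [Matrix.mul_apply, hsum]
      refine Finset.sum_congr rfl fun c _ => ?_
      simp only [M, Z, Matrix.of_apply, mul_ite, mul_one, mul_zero]
      split_ifs <;> simp_all
    rw [h1, Matrix.one_apply]
    by_cases hab : IsRefinement a.1 d.1
    · rw [hmu _ _ hab]
      exact if_congr Subtype.ext_iff.symm rfl rfl
    · have hne : a ≠ d := fun h => hab (h ▸ (isRefinement_iff (hS a)).2 (Good.refl _))
      rw [if_neg hne]
      refine Finset.sum_eq_zero fun c hc => absurd ?_ hab
      rw [refInterval, Finset.mem_filter] at hc
      have hcd := (isRefinement_iff (hS d)).1 hc.2.2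
      have hac := (isRefinement_iff ((hS d).of_preserves hcd.1)).1 hc.2.1
      exact (isRefinement_iff (hS d)).2 (hac.trans (hS d) hcd)
  have hZM : Z * M = 1 := mul_eq_one_comm.1 hMZ
  have hαα : IsRefinement α α := (isRefinement_iff hα).2 (Good.refl α)
  have key := congrFun (congrFun hZM ⟨b, hb⟩) ⟨α, hαα⟩
  rw [Matrix.one_apply, Matrix.mul_apply] at key
  rw [hsum ⟨b, hb⟩ ⟨α, hαα⟩ fun c => mu c α]
  simp only [Subtype.mk.injEq] at key
  rw [← key]
  refine Finset.sum_congr rfl fun c _ => ?_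
  simp only [M, Z, Matrix.of_apply]
  split_ifs <;> simp_all

lemma mem_cycleFinset {π : Equiv.Perm γ} {x y : γ} : y ∈ cycleFinset π x ↔ π.SameCycle x y := by
  simp [cycleFinset]

variable {K : Type*} [Field K] {σ α c : Equiv.Perm γ} {f : γ → K}

/-- Coarsening `c` to `α` keeps flows, as every cycle of `α` is a union of cycles of `c`. -/
lemma IsFlow.of_refinement (hc : ∀ x, α.SameCycle x (c x)) (hf : IsFlow σ c f) :
    IsFlow σ α f := by
  refine ⟨hf.1, fun x => ?_⟩
  refine Finset.sum_cancels_of_partition_cancels (Equiv.Perm.SameCycle.setoid c) fun y hy => ?_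
  rw [← hf.2 y]
  refine Finset.sum_congr ?_ fun _ _ => rfl
  ext z
  rw [Finset.mem_filter, mem_cycleFinset, mem_cycleFinset] at *
  refine ⟨fun h => Equiv.Perm.SameCycle.symm h.2, fun h => ⟨?_, h.symm⟩⟩
  exact hy.trans (sameCycle_of_preserves hc h)

/-- The refinements of `α` on which `f` remains a flow are those above the first return map of `α`
to the support of `f`; that map is `α` itself exactly when `f` is nowhere zero. -/
lemma exists_minimal (hα : Short α) (hf : IsFlow σ α f) : ∃ b : Equiv.Perm γ, IsRefinement b α ∧
      (∀ c, IsRefinement c α → (IsFlow σ c f ↔ IsRefinement b c)) ∧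
      (b = α ↔ ∀ i, f i = 0 → α i = i) := by
  have nz : ∀ x, f x ≠ 0 → f (α x) = 0 → f (α (α x)) ≠ 0 := by
    intro x hx h1 h2
    refine hx ?_
    rw [← hf.2 x, Finset.sum_eq_single x]
    · intro y hy _
      rcases hα.mem_iff.1 (mem_cycleFinset.1 hy) with rfl | rfl | rfl
      exacts [absurd rfl ‹_›, h1, h2]
    · exact fun h => absurd (mem_cycleFinset.2 .rfl) h
  -- By `nz`, a point of the support returns to the support after at most two steps.
  let g : γ → γ := fun x => if f x = 0 then x else if f (α x) = 0 then α (α x) else α x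
  have g0 : ∀ {x}, f x = 0 → g x = x := fun h => if_pos h
  have g1 : ∀ {x}, f x ≠ 0 → f (α x) ≠ 0 → g x = α x := fun h h' => by
    simp [g, h, h']
  have g2 : ∀ {x}, f x ≠ 0 → f (α x) = 0 → g x = α (α x) := fun h h' => by
    simp [g, h, h']
  have fg : ∀ {x}, f x ≠ 0 → f (g x) ≠ 0 := by
    intro x h
    by_cases h' : f (α x) = 0
    · rw [g2 h h']; exact nz x h h'
    · rwa [g1 h h']
  have ginj : Function.Injective g := by
    intro x y hxy
    by_cases hx : f x = 0 <;> by_cases hy : f y = 0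
    · rwa [g0 hx, g0 hy] at hxy
    · exact absurd (by rw [← hxy, g0 hx, hx]) (fg hy)
    · exact absurd (by rw [hxy, g0 hy, hy]) (fg hx)
    · by_cases hx' : f (α x) = 0 <;> by_cases hy' : f (α y) = 0
      · rw [g2 hx hx', g2 hy hy'] at hxy
        exact α.injective (α.injective hxy)
      · rw [g2 hx hx', g1 hy hy'] at hxy
        exact absurd (α.injective hxy ▸ hx') hy
      · rw [g1 hx hx', g2 hy hy'] at hxy
        exact absurd (α.injective hxy ▸ hy') hx
      · rw [g1 hx hx', g1 hy hy'] at hxy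
        exact α.injective hxy
  let b : Equiv.Perm γ := Equiv.ofBijective g (Finite.injective_iff_bijective.1 ginj)
  have hb : ∀ x, b x = g x := fun _ => rfl
  have hbα : Good b α := by
    refine ⟨fun x => ?_, fun x h2 e1 e2 => ?_⟩
    · simp only [hb, g]
      split_ifs
      exacts [.rfl, sc_sq α x, sc_apply α x]
    · have h1 : α x ≠ x := fun h => h2 (by rw [h, h])
      rw [hb] at e1 e2
      by_cases h' : f (α x) = 0
      · rw [g0 h'] at e2
        exact h1 e2
      · by_cases h : f x = 0
        · rw [g0 h] at e1
          exact h2 e1.symm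
        · rw [g1 h h'] at e1
          exact h1 (α.injective e1).symm
  refine ⟨b, (isRefinement_iff hα).2 hbα, fun c hc => ?_, ?_⟩
  · have hc := (isRefinement_iff hα).1 hc
    rw [isRefinement_iff (hα.of_preserves hc.1)]
    constructor
    · intro hfc
      refine hbα.of_preserves hα hc fun x => ?_
      -- The cycle of `x` is `{x, p, t}`. If the `c`-cycle of `x` missed `t`, it would be `{x, p}`
      -- or `{x}`, and its zero sum would give `f t = 0` or `f x = 0`.
      have claim : ∀ p t, (∀ y, α.SameCycle x y → y = x ∨ y = p ∨ y = t) → α.SameCycle x t →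
          f x ≠ 0 → f t ≠ 0 → c.SameCycle x t := by
        intro p t hS hxt hx ht
        by_contra hct
        by_cases hp : c.SameCycle x p
        · have hsub : cycleFinset c x ⊆ cycleFinset α x := fun y hy =>
            mem_cycleFinset.2 (sameCycle_of_preserves hc.1 (mem_cycleFinset.1 hy))
          have hd := Finset.sum_sdiff hsub (f := f)
          rw [hfc.2, hf.2, add_zero, Finset.sum_eq_single t] at hd
          · exact ht hd
          · intro y hy hyt
            rw [Finset.mem_sdiff, mem_cycleFinset, mem_cycleFinset] at hy
            rcases hS y hy.1 with rfl | rfl | rfl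
            exacts [absurd .rfl hy.2, absurd hp hy.2, absurd rfl hyt]
          · intro h
            exact absurd (Finset.mem_sdiff.2
              ⟨mem_cycleFinset.2 hxt, fun h => hct (mem_cycleFinset.1 h)⟩) h
        · refine hx ?_
          rw [← hfc.2 x, Finset.sum_eq_single x]
          · intro y hy hyx
            have hy := mem_cycleFinset.1 hy
            rcases hS y (sameCycle_of_preserves hc.1 hy) with rfl | rfl | rfl
            exacts [absurd rfl hyx, absurd hy hp, absurd hy hct]
          · exact fun h => absurd (mem_cycleFinset.2 .rfl) h
      by_cases hx : f x = 0
      · rw [hb, g0 hx]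
      · by_cases hx' : f (α x) = 0
        · rw [hb, g2 hx hx']
          exact claim (α x) _ (fun y hy => hα.mem_iff.1 hy) (sc_sq α x) hx (nz x hx hx')
        · rw [hb, g1 hx hx']
          refine claim (α (α x)) _ (fun y hy => ?_) (sc_apply α x) hx hx'
          have := hα.mem_iff.1 hy
          tauto
    · intro hbc
      refine ⟨hf.1, fun x => ?_⟩
      by_cases hex : ∃ y, c.SameCycle x y ∧ f y ≠ 0
      · obtain ⟨y, hxy, hy⟩ := hex
        rw [← hf.2 x]
        refine Finset.sum_subset (fun z hz => mem_cycleFinset.2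
          (sameCycle_of_preserves hc.1 (mem_cycleFinset.1 hz))) fun z hz hzc => ?_
        by_contra hfz
        refine hzc (mem_cycleFinset.2 (hxy.trans ?_))
        have s1 := hbc.1 y
        have s2 := hbc.1 (α y)
        rw [hb] at s1 s2
        have hyz := (sameCycle_of_preserves hc.1 hxy).symm.trans (mem_cycleFinset.1 hz)
        rcases hα.mem_iff.1 hyz with rfl | rfl | rfl
        · exact .rfl
        · rwa [g1 hy hfz] at s1
        · by_cases hy' : f (α y) = 0
          · rwa [g2 hy hy'] at s1
          · rw [g1 hy hy'] at s1
            rw [g1 hy' hfz] at s2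
            exact s1.trans s2
      · push Not at hex
        exact Finset.sum_eq_zero fun y hy => hex y (mem_cycleFinset.1 hy)
  · constructor
    · intro h i hi
      rw [← h, hb, g0 hi]
    · intro h
      ext x
      rw [hb]
      by_cases hx : f x = 0
      · rw [g0 hx, h x hx]
      · refine g1 hx fun hx' => hx ?_
        rwa [α.injective (h _ hx')] at hx'

end Hypermap

open Hypermap in
/-- if each cycle of `α` has at most three elements and `K` is a
finite field with `q` elements, then the flow polynomial evaluated at `q`,
`C(σ,α;q) = Σ_{β≤α} μ(β,α)·q^{n+κ(σ,β)−z(β)−z(σ)}`, equals the number of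
nowhere zero flows on `(σ,α)`, i.e. flows `f` with `f i = 0` only at fixed
points `i` of `α`. -/
theorem flow_polynomial_counts_nowhere_zero_flows
    {γ : Type*} [Fintype γ] [DecidableEq γ] (σ α : Equiv.Perm γ)
    (h3 : ∀ x, Nat.card (cycleSet α x) ≤ 3)
    (mu : Equiv.Perm γ → Equiv.Perm γ → ℤ) (hmu : IsMobius mu)
    (K : Type*) [Field K] [Fintype K] (q : ℕ) (hq : Fintype.card K = q) :
    (∑ β ∈ refInterval 1 α,
        mu β α * (q : ℤ) ^ (Fintype.card γ + kappa σ β - zc β - zc σ)) =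
      Nat.card {f : γ → K // IsFlow σ α f ∧ ∀ i, f i = 0 → α i = i} := by
  subst hq
  have hα : Short α := h3
  have hmem : ∀ β, β ∈ refInterval 1 α ↔ IsRefinement β α := by
    intro β
    simp only [refInterval, Finset.mem_filter, Finset.mem_univ, true_and]
    refine ⟨fun h => h.2, fun h => ⟨?_, h⟩⟩
    exact (isRefinement_iff (hα.of_preserves h.1)).2 (Good.one β)
  have hcount : ∀ β : Equiv.Perm γ,
      ((Fintype.card K : ℤ) ^ (Fintype.card γ + kappa σ β - zc β - zc σ)) =
        ∑ f : γ → K, if IsFlow σ β f then 1 else 0 := by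
    intro β
    rw [← Nat.cast_pow, ← card_flows, Nat.card_eq_fintype_card, Fintype.card_subtype]
    simp
  simp only [hcount, Finset.mul_sum]
  rw [Finset.sum_comm, Nat.card_eq_fintype_card, Fintype.card_subtype,
    Finset.card_filter, Nat.cast_sum]
  refine Finset.sum_congr rfl fun f _ => ?_
  by_cases hf : IsFlow σ α f
  -- The coefficient of a flow `f` is the sum of `μ(β, α)` over an interval `[b, α]`.
  · obtain ⟨b, hb, hflow, heq⟩ := exists_minimal hα hf
    have := mobius_dual hα hmu hb
    simp only [heq] at this
    simp only [hf, true_and, Nat.cast_ite, Nat.cast_one, Nat.cast_zero]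
    refine Eq.trans ?_ (this.trans (if_congr Iff.rfl rfl rfl))
    simp only [mul_ite, mul_one, mul_zero]
    rw [← Finset.sum_filter]
    refine Finset.sum_congr ?_ fun _ _ => rfl
    ext β
    rw [Finset.mem_filter, hmem, refInterval, Finset.mem_filter]
    constructor
    · exact fun h => ⟨Finset.mem_univ _, (hflow β h.1).1 h.2, h.1⟩
    · exact fun h => ⟨h.2.2, (hflow β h.2.2).2 h.2.1⟩
  · simp only [hf, false_and, if_false, Nat.cast_zero]
    refine Finset.sum_eq_zero fun β hβ => ?_
    have : ¬ IsFlow σ β f := fun h => hf (h.of_refinement ((hmem β).1 hβ).1)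
    simp [this]
end
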